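/- Let R̃ : ℝ → ℝ^{3×3} be differentiable with R̃(t) ∈ SO(3) for all t and R̃′(t) = R̃(t)·(ω_W(t))^∧ − (ω_D(t))^∧·R̃(t), where ω_W = [p, q, r]^⊤. Suppose the pitch- and yaw-rates exactly track the command (13), i.e., [q(t), r(t)]^⊤ = Π_R R̃(t)^⊤ ω_D(t) − 2 k_{R̃} e_{R̃}(t) for some constant k_{R̃} > 0. Then d/dt Ψ(R̃(t)) = −2 k_{R̃} ‖e_{R̃}(t)‖² = −2 k_{R̃} Ψ(R̃(t)) (1 − Ψ(R̃(t))); in particular Ψ(R̃(t)) is nonincreasing. -/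

import Mathlib

open Matrix

attribute [local instance] Matrix.normedAddCommGroup Matrix.normedSpace

/-- The hat map `(ξ)^∧` sending a vector in ℝ³ to a skew-symmetric 3×3 matrix. -/
def hatMap (ξ : Fin 3 → ℝ) : Matrix (Fin 3) (Fin 3) ℝ :=
  !![0, -ξ 2, ξ 1; ξ 2, 0, -ξ 0; -ξ 1, ξ 0, 0]

/-- The 2×3 projection matrix `Π_R = [[0,1,0],[0,0,1]]`. -/
def PiR : Matrix (Fin 2) (Fin 3) ℝ := !![0, 1, 0; 0, 0, 1]

/-- The attitude error function `Ψ(R) = (1/2)(1 − R₁₁)`. -/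
noncomputable def Psi (R : Matrix (Fin 3) (Fin 3) ℝ) : ℝ := (1 / 2 : ℝ) * (1 - R 0 0)

/-- The attitude error vector `e_R = (1/2)[R₁₃, −R₁₂]ᵀ`. -/
noncomputable def eR (R : Matrix (Fin 3) (Fin 3) ℝ) : Fin 2 → ℝ :=
  ![R 0 2 / 2, -(R 0 1) / 2]

/-!
For `R ∈ SO(3)` the hat map satisfies `ω^∧ R = R (Rᵀ ω)^∧`, so the kinematics reduce to
`R̃′ = R̃ ν^∧` with the relative angular velocity `ν = ω_W - R̃ᵀ ω_D`. The `(1, 1)` entry gives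
`d/dt Ψ(R̃) = e_R̃ ⬝ Π_R ν`, and the command is exactly `Π_R ν = -2 k e_R̃`. Finally, since the
first row of `R̃` is a unit vector, `‖e_R̃‖² = (1 - R̃₁₁²) / 4 = Ψ(R̃) (1 - Ψ(R̃))`.
-/

section Orthogonal

variable {n α : Type*} [Fintype n] [DecidableEq n] [CommRing α] {A : Matrix n n α}

theorem adjugate_eq_transpose_of_mem_specialOrthogonalGroup
    (hA : A ∈ specialOrthogonalGroup n α) : A.adjugate = Aᵀ := by
  obtain ⟨horth, hdet⟩ := mem_specialOrthogonalGroup_iff.mp hA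
  calc A.adjugate = A⁻¹ := by rw [inv_def, hdet, Ring.inverse_one, one_smul]
    _ = Aᵀ := inv_eq_left_inv ((mem_orthogonalGroup_iff' n α).mp horth)

theorem row_dotProduct_self_of_mem_orthogonalGroup (hA : A ∈ orthogonalGroup n α) (i : n) :
    A i ⬝ᵥ A i = 1 := by
  simpa [mul_apply, dotProduct] using congr_fun₂ ((mem_orthogonalGroup_iff n α).mp hA) i i

end Orthogonal

theorem hatMap_sub (x y : Fin 3 → ℝ) : hatMap (x - y) = hatMap x - hatMap y := by
  ext i j
  fin_cases i <;> fin_cases j <;> simp [hatMap, neg_add_eq_sub]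

-- Matrix form of the cofactor identity `A u ×₃ A v = (adj A)ᵀ (u ×₃ v)`.
theorem transpose_mul_hatMap_mul (A : Matrix (Fin 3) (Fin 3) ℝ) (x : Fin 3 → ℝ) :
    Aᵀ * hatMap x * A = hatMap (A.adjugate *ᵥ x) := by
  ext i j
  fin_cases i <;> fin_cases j <;>
    simp only [hatMap, adjugate_fin_three, mul_apply, mulVec, vec3_dotProduct, Fin.sum_univ_three,
      transpose_apply, of_apply, cons_val, Fin.zero_eta, Fin.mk_one, Fin.reduceFinMk] <;>
    ring

theorem PiR_mulVec (x : Fin 3 → ℝ) : PiR *ᵥ x = ![x 1, x 2] := by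
  ext i
  fin_cases i <;> simp [PiR, mulVec, vecHead, vecTail]

theorem mul_hatMap_apply_zero_zero (R : Matrix (Fin 3) (Fin 3) ℝ) (x : Fin 3 → ℝ) :
    (R * hatMap x) 0 0 = -2 * (eR R ⬝ᵥ PiR *ᵥ x) := by
  simp only [mul_apply, Fin.sum_univ_three, hatMap, of_apply, cons_val, PiR_mulVec, eR,
    vec2_dotProduct]
  ring

theorem eR_dotProduct_self {R : Matrix (Fin 3) (Fin 3) ℝ} (hrow : R 0 ⬝ᵥ R 0 = 1) :
    eR R ⬝ᵥ eR R = Psi R * (1 - Psi R) := by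
  rw [vec3_dotProduct] at hrow
  simp only [eR, Psi, vec2_dotProduct, cons_val]
  linear_combination hrow / 4

section SpecialOrthogonal

variable {R : Matrix (Fin 3) (Fin 3) ℝ}

theorem hatMap_mul_of_mem_specialOrthogonalGroup
    (hR : R ∈ specialOrthogonalGroup (Fin 3) ℝ) (x : Fin 3 → ℝ) :
    hatMap x * R = R * hatMap (Rᵀ *ᵥ x) := by
  have hmul : R * Rᵀ = 1 := (mem_orthogonalGroup_iff (Fin 3) ℝ).mp
    (mem_specialOrthogonalGroup_iff.mp hR).1
  calc hatMap x * R = R * (Rᵀ * hatMap x * R) := by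
        rw [← mul_assoc, ← mul_assoc, hmul, one_mul]
    _ = R * hatMap (Rᵀ *ᵥ x) := by
        rw [transpose_mul_hatMap_mul, adjugate_eq_transpose_of_mem_specialOrthogonalGroup hR]

theorem mul_hatMap_sub_hatMap_mul_of_mem_specialOrthogonalGroup
    (hR : R ∈ specialOrthogonalGroup (Fin 3) ℝ) (x y : Fin 3 → ℝ) :
    R * hatMap x - hatMap y * R = R * hatMap (x - Rᵀ *ᵥ y) := by
  rw [hatMap_mul_of_mem_specialOrthogonalGroup hR, hatMap_sub, mul_sub]

end SpecialOrthogonal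

section Kinematics

variable {R : ℝ → Matrix (Fin 3) (Fin 3) ℝ} {t : ℝ}

theorem hasDerivAt_Psi {R' : Matrix (Fin 3) (Fin 3) ℝ} (hR : HasDerivAt R R' t) :
    HasDerivAt (fun s => Psi (R s)) (-(1 / 2) * R' 0 0) t := by
  have hentry : HasDerivAt (fun s => R s 0 0) (R' 0 0) t :=
    hasDerivAt_pi.mp (hasDerivAt_pi.mp hR 0) 0
  exact ((hentry.const_sub 1).const_mul (1 / 2 : ℝ)).congr_deriv (by ring)

theorem hasDerivAt_Psi_of_kinematics {ωW ωD : Fin 3 → ℝ}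
    (hSO : R t ∈ specialOrthogonalGroup (Fin 3) ℝ)
    (hR : HasDerivAt R (R t * hatMap ωW - hatMap ωD * R t) t) :
    HasDerivAt (fun s => Psi (R s)) (eR (R t) ⬝ᵥ PiR *ᵥ (ωW - (R t)ᵀ *ᵥ ωD)) t := by
  rw [mul_hatMap_sub_hatMap_mul_of_mem_specialOrthogonalGroup hSO] at hR
  refine (hasDerivAt_Psi hR).congr_deriv ?_
  rw [mul_hatMap_apply_zero_zero]
  ring

theorem hasDerivAt_Psi_of_rate_command {ωW ωD : Fin 3 → ℝ} {k : ℝ}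
    (hSO : R t ∈ specialOrthogonalGroup (Fin 3) ℝ)
    (hR : HasDerivAt R (R t * hatMap ωW - hatMap ωD * R t) t)
    (hcommand : PiR *ᵥ ωW = PiR *ᵥ ((R t)ᵀ *ᵥ ωD) - (2 * k) • eR (R t)) :
    HasDerivAt (fun s => Psi (R s)) (-(2 * k) * (eR (R t) ⬝ᵥ eR (R t))) t := by
  refine (hasDerivAt_Psi_of_kinematics hSO hR).congr_deriv ?_
  rw [mulVec_sub, hcommand, sub_sub_cancel_left, ← neg_smul, dotProduct_smul, smul_eq_mul]

end Kinematics

/-- if `R̃(t) ∈ SO(3)` satisfies `R̃′ = R̃(ω_W)^∧ − (ω_D)^∧ R̃` with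
`ω_W = [p, q, r]ᵀ`, and the pitch- and yaw-rates exactly track the command (13), i.e.
`[q, r]ᵀ = Π_R R̃ᵀ ω_D − 2 k_{R̃} e_{R̃}` with `k_{R̃} > 0`, then
`d/dt Ψ(R̃(t)) = −2k_{R̃}‖e_{R̃}‖² = −2k_{R̃}Ψ(R̃)(1 − Ψ(R̃))`; in particular `Ψ(R̃(t))`
is nonincreasing. -/
theorem attitude_error_decreases_under_command
    (Rt : ℝ → Matrix (Fin 3) (Fin 3) ℝ)
    (pp q r : ℝ → ℝ) (ωD : ℝ → Fin 3 → ℝ) (kR : ℝ) (hkR : 0 < kR)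
    (hSO : ∀ t : ℝ, (Rt t)ᵀ * Rt t = 1 ∧ (Rt t).det = 1)
    (hderiv : ∀ t : ℝ,
      HasDerivAt Rt (Rt t * hatMap ![pp t, q t, r t] - hatMap (ωD t) * Rt t) t)
    (htrack : ∀ t : ℝ,
      (![q t, r t] : Fin 2 → ℝ)
        = PiR.mulVec ((Rt t)ᵀ.mulVec (ωD t)) - (2 * kR) • eR (Rt t)) :
    (∀ t : ℝ,
      HasDerivAt (fun s => Psi (Rt s)) (-(2 * kR) * (eR (Rt t) ⬝ᵥ eR (Rt t))) t ∧
      -(2 * kR) * (eR (Rt t) ⬝ᵥ eR (Rt t))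
        = -(2 * kR) * (Psi (Rt t) * (1 - Psi (Rt t)))) ∧
    Antitone fun t => Psi (Rt t) := by
  have hmem (t : ℝ) : Rt t ∈ specialOrthogonalGroup (Fin 3) ℝ :=
    mem_specialOrthogonalGroup_iff.mpr
      ⟨(mem_orthogonalGroup_iff' (Fin 3) ℝ).mpr (hSO t).1, (hSO t).2⟩
  have hPsi (t : ℝ) :
      HasDerivAt (fun s => Psi (Rt s)) (-(2 * kR) * (eR (Rt t) ⬝ᵥ eR (Rt t))) t :=
    hasDerivAt_Psi_of_rate_command (hmem t) (hderiv t) ((PiR_mulVec _).trans (htrack t))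
  have heR (t : ℝ) : eR (Rt t) ⬝ᵥ eR (Rt t) = Psi (Rt t) * (1 - Psi (Rt t)) :=
    eR_dotProduct_self (row_dotProduct_self_of_mem_orthogonalGroup
      (mem_specialOrthogonalGroup_iff.mp (hmem t)).1 0)
  refine ⟨fun t => ⟨hPsi t, by rw [heR t]⟩, antitone_of_hasDerivAt_nonpos hPsi fun t => ?_⟩
  have hnonneg : 0 ≤ eR (Rt t) ⬝ᵥ eR (Rt t) := by
    simpa using dotProduct_self_star_nonneg (eR (Rt t))
  exact mul_nonpos_of_nonpos_of_nonneg (by linarith) hnonneg
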